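/- arXiv:2102.02708 — 3 statements merged into one kernel-verified Lean document; each statement's English description precedes it below -/
import Mathlib

section
/- Let α ∈ (0, 1/2] and let f ∈ ℝ[z₁,…,zₙ] be a multiaffine polynomial with nonnegative coefficients, not identically zero, that is Γ_{2α}-stable. Then f is α-fractionally log-concave: the function (x₁,…,xₙ) ↦ log f(x₁^α,…,xₙ^α) is concave on the positive orthant ℝ_{>0}ⁿ. -/
open Finset

/-- `z` lies in the open sector `Γ_α` of aperture `απ` centered on the positive real axis. -/
def inSector (α : ℝ) (z : ℂ) : Prop := z ≠ 0 ∧ |z.arg| < α * Real.pi / 2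

/-!
Let `S` be a random set with weights `c_S ∏_{i ∈ S} x_i ^ α`. Along a segment with direction `d`,
the second derivative of `log f(x ^ α)` is `α² Var (∑_{i ∈ S} v_i) - α E ∑_{i ∈ S} v_i²`, where
`v_i = d_i / x_i`, so concavity amounts to `α Var (∑_{i ∈ S} v_i) ≤ E ∑_{i ∈ S} v_i²`. By AM-GM
and `Var (1_{i ∈ S}) ≤ E 1_{i ∈ S}`, this follows from the bounds
`α ∑_j |Cov (1_{i ∈ S}, 1_{j ∈ S})| ≤ Var (1_{i ∈ S})`.

To prove the latter, fix `i`, substitute `z_i = z` and `z_j = exp (ζ s_j)` with `|s_j| ≤ 1` for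
`j ≠ i`, and write the result as `H ζ + z G ζ`. By stability it does not vanish for
`|Im ζ| < απ` and `z ∈ Γ_{2α}`, so `log (H / G)` maps the strip `|Im ζ| < απ` into the strip
`|Im w| ≤ (1 - α)π`. Schwarz's lemma bounds its derivative at `0` by `(1 - α) / α`; when `s_j` is
the sign of `Cov (1_{i ∈ S}, 1_{j ∈ S})`, this is the required bound.
-/

lemma inSector_ofReal_mul {β r : ℝ} {z : ℂ} (hr : 0 < r) (hz : inSector β z) :
    inSector β (r * z) :=
  ⟨mul_ne_zero (Complex.ofReal_ne_zero.2 hr.ne') hz.1, by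
    rw [Complex.arg_real_mul z hr]
    exact hz.2⟩

lemma inSector_ofReal {β r : ℝ} (hβ : 0 < β) (hr : 0 < r) : inSector β r := by
  refine ⟨Complex.ofReal_ne_zero.2 hr.ne', ?_⟩
  rw [Complex.arg_ofReal_of_nonneg hr.le, abs_zero]
  positivity

lemma abs_arg_exp_le (w : ℂ) : |(Complex.exp w).arg| ≤ |w.im| := by
  rcases lt_or_ge |w.im| Real.pi with him | him
  · rw [← Complex.log_im, Complex.log_exp (abs_lt.1 him).1 (abs_lt.1 him).2.le]
  · exact (Complex.abs_arg_le_pi _).trans him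

lemma inSector_exp {β : ℝ} {w : ℂ} (hw : |w.im| < β * Real.pi / 2) :
    inSector β (Complex.exp w) :=
  ⟨Complex.exp_ne_zero w, (abs_arg_exp_le w).trans_lt hw⟩

lemma abs_arg_neg {z : ℂ} (hz : z ≠ 0) : |(-z).arg| = Real.pi - |z.arg| := by
  rw [← Complex.angle_one_left hz, ← Complex.angle_one_left (neg_ne_zero.2 hz),
    InnerProductGeometry.angle_neg_right]

lemma abs_arg_le_of_not_inSector_neg {β : ℝ} {z : ℂ} (hz : z ≠ 0) (h : ¬ inSector β (-z)) :
    |z.arg| ≤ Real.pi - β * Real.pi / 2 := by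
  have hneg : β * Real.pi / 2 ≤ |(-z).arg| := not_lt.1 fun hlt => h ⟨neg_ne_zero.2 hz, hlt⟩
  rw [abs_arg_neg hz] at hneg
  linarith

lemma abs_arg_div_le_of_forall_add_mul_ne_zero {β : ℝ} {A B : ℂ} (hA : A ≠ 0) (hB : B ≠ 0)
    (h : ∀ z, inSector β z → A + z * B ≠ 0) : |(A / B).arg| ≤ Real.pi - β * Real.pi / 2 :=
  abs_arg_le_of_not_inSector_neg (div_ne_zero hA hB) fun hs => h _ hs <| by
    field_simp
    ring

lemma mem_slitPlane_of_abs_arg_lt_pi {z : ℂ} (hz : z ≠ 0) (h : |z.arg| < Real.pi) :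
    z ∈ Complex.slitPlane :=
  Complex.mem_slitPlane_iff_arg.2 ⟨((le_abs_self _).trans_lt h).ne, hz⟩

/-- The open strip `|Im z| < a` around the real axis, the domain of the logarithms of points of a
sector. -/
def horizontalStrip (a : ℝ) : Set ℂ := {z | |z.im| < a}

lemma zero_mem_horizontalStrip {a : ℝ} (ha : 0 < a) : (0 : ℂ) ∈ horizontalStrip a := by
  simpa [horizontalStrip] using ha

lemma isOpen_horizontalStrip (a : ℝ) : IsOpen (horizontalStrip a) :=
  isOpen_lt (by fun_prop) continuous_const

lemma convex_horizontalStrip (a : ℝ) : Convex ℝ (horizontalStrip a) := by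
  simpa only [horizontalStrip, abs_lt, Set.ofPred_and] using
    (convex_halfSpace_im_gt (-a)).inter (convex_halfSpace_im_lt a)

lemma one_sub_ne_zero_of_norm_lt_one {u : ℂ} (hu : ‖u‖ < 1) : 1 - u ≠ 0 := fun h =>
  hu.ne (by rw [← sub_eq_zero.1 h, norm_one])

lemma re_one_add_div_one_sub_pos {u : ℂ} (hu : ‖u‖ < 1) : 0 < ((1 + u) / (1 - u)).re := by
  have hden : 0 < Complex.normSq (1 - u) :=
    Complex.normSq_pos.2 (one_sub_ne_zero_of_norm_lt_one hu)
  have hnorm : u.re * u.re + u.im * u.im < 1 := by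
    rw [← Complex.normSq_apply, ← Complex.sq_norm]
    exact pow_lt_one₀ (norm_nonneg u) hu two_ne_zero
  rw [Complex.div_re, ← add_div]
  refine div_pos ?_ hden
  simp only [Complex.add_re, Complex.one_re, Complex.sub_re, Complex.add_im, Complex.one_im,
    Complex.sub_im]
  linarith

lemma norm_sub_one_lt_norm_add_one {w : ℂ} (hw : 0 < w.re) : ‖w - 1‖ < ‖w + 1‖ := by
  rw [← sq_lt_sq₀ (norm_nonneg _) (norm_nonneg _), Complex.sq_norm, Complex.sq_norm,
    Complex.normSq_apply, Complex.normSq_apply]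
  simp only [Complex.add_re, Complex.one_re, Complex.sub_re, Complex.add_im, Complex.one_im,
    Complex.sub_im]
  linarith

lemma re_exp_pos {w : ℂ} (hw : |w.im| < Real.pi / 2) : 0 < (Complex.exp w).re := by
  rw [Complex.exp_re]
  exact mul_pos (Real.exp_pos _) (Real.cos_pos_of_mem_Ioo (abs_lt.1 hw))

/-- A conformal map of the unit disc onto `horizontalStrip a` fixing `0`, used to transport
Schwarz's lemma. -/
noncomputable def discToStrip (a : ℝ) (u : ℂ) : ℂ :=
  ((2 * a / Real.pi : ℝ) : ℂ) * Complex.log ((1 + u) / (1 - u))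

/-- A conformal map of `horizontalStrip b` onto the unit disc fixing `0`, inverse to
`discToStrip b`. -/
noncomputable def stripToDisc (b : ℝ) (w : ℂ) : ℂ :=
  (Complex.exp ((Real.pi / (2 * b) : ℝ) * w) - 1) / (Complex.exp ((Real.pi / (2 * b) : ℝ) * w) + 1)

@[simp]
lemma discToStrip_zero (a : ℝ) : discToStrip a 0 = 0 := by simp [discToStrip]

@[simp]
lemma stripToDisc_zero (b : ℝ) : stripToDisc b 0 = 0 := by simp [stripToDisc]

lemma differentiableOn_discToStrip (a : ℝ) :
    DifferentiableOn ℂ (discToStrip a) (Metric.ball 0 1) := by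
  intro u hu
  rw [mem_ball_zero_iff] at hu
  have hquot : DifferentiableAt ℂ (fun u : ℂ => (1 + u) / (1 - u)) u :=
    (differentiableAt_id.const_add 1).div (differentiableAt_id.const_sub 1)
      (one_sub_ne_zero_of_norm_lt_one hu)
  exact ((hquot.clog (Or.inl (re_one_add_div_one_sub_pos hu))).const_mul _).differentiableWithinAt

lemma mapsTo_discToStrip {a : ℝ} (ha : 0 < a) :
    Set.MapsTo (discToStrip a) (Metric.ball 0 1) (horizontalStrip a) := by
  intro u hu
  rw [mem_ball_zero_iff] at hu
  have harg : |((1 + u) / (1 - u)).arg| < Real.pi / 2 :=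
    Complex.abs_arg_lt_pi_div_two_iff.2 (Or.inl (re_one_add_div_one_sub_pos hu))
  have hscale : 0 < 2 * a / Real.pi := by positivity
  calc |(discToStrip a u).im| = 2 * a / Real.pi * |((1 + u) / (1 - u)).arg| := by
        rw [discToStrip, Complex.im_ofReal_mul, Complex.log_im, abs_mul, abs_of_pos hscale]
    _ < 2 * a / Real.pi * (Real.pi / 2) := mul_lt_mul_of_pos_left harg hscale
    _ = a := by field_simp

lemma hasDerivAt_discToStrip_zero (a : ℝ) :
    HasDerivAt (discToStrip a) ((4 * a / Real.pi : ℝ) : ℂ) 0 := by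
  have hquot : HasDerivAt (fun u : ℂ => (1 + u) / (1 - u)) 2 0 :=
    (((hasDerivAt_id' (0 : ℂ)).const_add 1).fun_div
      ((hasDerivAt_id' (0 : ℂ)).const_sub 1) (by simp)).congr_deriv (by norm_num)
  refine ((hquot.clog (by simp)).const_mul ((2 * a / Real.pi : ℝ) : ℂ)).congr_deriv ?_
  push_cast
  ring

lemma re_exp_pos_of_mem_horizontalStrip {b : ℝ} (hb : 0 < b) {w : ℂ}
    (hw : w ∈ horizontalStrip b) :
    0 < (Complex.exp ((Real.pi / (2 * b) : ℝ) * w)).re := by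
  refine re_exp_pos ?_
  have hscale : 0 < Real.pi / (2 * b) := by positivity
  calc |((Real.pi / (2 * b) : ℝ) * w).im| = Real.pi / (2 * b) * |w.im| := by
        rw [Complex.im_ofReal_mul, abs_mul, abs_of_pos hscale]
    _ < Real.pi / (2 * b) * b := mul_lt_mul_of_pos_left hw hscale
    _ = Real.pi / 2 := by field_simp

lemma add_one_ne_zero_of_re_pos {w : ℂ} (hw : 0 < w.re) : w + 1 ≠ 0 :=
  norm_pos_iff.1 ((norm_nonneg _).trans_lt (norm_sub_one_lt_norm_add_one hw))

lemma differentiableOn_stripToDisc {b : ℝ} (hb : 0 < b) :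
    DifferentiableOn ℂ (stripToDisc b) (horizontalStrip b) := by
  intro w hw
  have hexp : DifferentiableAt ℂ (fun w => Complex.exp ((Real.pi / (2 * b) : ℝ) * w)) w := by
    fun_prop
  exact ((hexp.sub_const 1).div (hexp.add_const 1)
    (add_one_ne_zero_of_re_pos (re_exp_pos_of_mem_horizontalStrip hb hw))).differentiableWithinAt

lemma mapsTo_stripToDisc {b : ℝ} (hb : 0 < b) :
    Set.MapsTo (stripToDisc b) (horizontalStrip b) (Metric.ball 0 1) := by
  intro w hw
  have hre := re_exp_pos_of_mem_horizontalStrip hb hw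
  rw [mem_ball_zero_iff, stripToDisc, norm_div,
    div_lt_one (norm_pos_iff.2 (add_one_ne_zero_of_re_pos hre))]
  exact norm_sub_one_lt_norm_add_one hre

lemma hasDerivAt_stripToDisc_zero (b : ℝ) :
    HasDerivAt (stripToDisc b) ((Real.pi / (4 * b) : ℝ) : ℂ) 0 := by
  have hexp : HasDerivAt (fun w => Complex.exp ((Real.pi / (2 * b) : ℝ) * w))
      ((Real.pi / (2 * b) : ℝ) : ℂ) 0 :=
    ((hasDerivAt_id' (0 : ℂ)).const_mul _).cexp.congr_deriv (by simp)
  refine ((hexp.sub_const 1).fun_div (hexp.add_const 1) (by simp)).congr_deriv ?_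
  simp only [mul_zero, Complex.exp_zero]
  push_cast
  ring

lemma norm_deriv_le_div_of_mapsTo_horizontalStrip {a b : ℝ} (ha : 0 < a) (hb : 0 < b)
    {f : ℂ → ℂ} (hf : DifferentiableOn ℂ f (horizontalStrip a))
    (hmaps : Set.MapsTo f (horizontalStrip a) (horizontalStrip b)) (hf0 : (f 0).im = 0) :
    ‖deriv f 0‖ ≤ b / a := by
  set g : ℂ → ℂ := fun z => f z - f 0 with hg
  have hgmaps : Set.MapsTo g (horizontalStrip a) (horizontalStrip b) := fun z hz => by
    simpa [horizontalStrip, hg, hf0] using hmaps hz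
  set F : ℂ → ℂ := stripToDisc b ∘ g ∘ discToStrip a with hF
  have hF0 : F 0 = 0 := by simp [hF, hg]
  have hFdiff : DifferentiableOn ℂ F (Metric.ball 0 1) :=
    (differentiableOn_stripToDisc hb).comp
      ((hf.sub_const _).comp (differentiableOn_discToStrip a) (mapsTo_discToStrip ha))
      (hgmaps.comp (mapsTo_discToStrip ha))
  have hFmaps : Set.MapsTo F (Metric.ball 0 1) (Metric.closedBall (F 0) 1) := by
    rw [hF0]
    exact ((mapsTo_stripToDisc hb).comp (hgmaps.comp (mapsTo_discToStrip ha))).mono_right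
      Metric.ball_subset_closedBall
  have hgderiv : HasDerivAt g (deriv f 0) 0 :=
    ((hf.differentiableAt ((isOpen_horizontalStrip a).mem_nhds
      (zero_mem_horizontalStrip ha))).hasDerivAt).sub_const _
  have hFderiv : HasDerivAt F
      ((Real.pi / (4 * b) : ℝ) * (deriv f 0 * (4 * a / Real.pi : ℝ))) 0 :=
    (hasDerivAt_stripToDisc_zero b).comp_of_eq 0
      (hgderiv.comp_of_eq 0 (hasDerivAt_discToStrip_zero a) (discToStrip_zero a).symm)
      (by simp [hg])
  have hbound := Complex.norm_deriv_le_one_of_mapsTo_ball hFdiff hFmaps one_pos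
  have hnorm : ‖deriv F 0‖ = ‖deriv f 0‖ * a / b := by
    rw [hFderiv.deriv, norm_mul, norm_mul, Complex.norm_of_nonneg (by positivity),
      Complex.norm_of_nonneg (by positivity)]
    field_simp
  rwa [hnorm, div_le_one hb, ← le_div_iff₀ ha] at hbound

lemma norm_deriv_le_div_of_abs_im_le {a b : ℝ} (ha : 0 < a) {f : ℂ → ℂ}
    (hf : DifferentiableOn ℂ f (horizontalStrip a))
    (hbound : ∀ z ∈ horizontalStrip a, |(f z).im| ≤ b) (hf0 : (f 0).im = 0) :
    ‖deriv f 0‖ ≤ b / a := by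
  have hb : 0 ≤ b := (abs_nonneg _).trans (hbound 0 (zero_mem_horizontalStrip ha))
  -- `b = 0` is allowed, so the open strip `|Im w| < b` has to be enlarged.
  rw [le_div_iff₀ ha]
  refine le_of_forall_gt_imp_ge_of_dense fun b' hb' => ?_
  rw [← le_div_iff₀ ha]
  exact norm_deriv_le_div_of_mapsTo_horizontalStrip ha (hb.trans_lt hb') hf
    (fun z hz => (hbound z hz).trans_lt hb') hf0

-- A zero of `B` at which `B / A` is not locally constant would, by the open mapping theorem, make
-- `B / A` take the values `-r` for small `r > 0` nearby.
open Filter Topology in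
lemma eventually_eq_zero_of_forall_add_ofReal_mul_ne_zero {A B : ℂ → ℂ} {z₀ : ℂ}
    (hA : AnalyticAt ℂ A z₀) (hB : AnalyticAt ℂ B z₀) (hAz : A z₀ ≠ 0) (hBz : B z₀ = 0)
    (hAB : ∀ᶠ z in 𝓝 z₀, ∀ r : ℝ, 0 < r → A z + r * B z ≠ 0) : ∀ᶠ z in 𝓝 z₀, B z = 0 := by
  have hAne : ∀ᶠ z in 𝓝 z₀, A z ≠ 0 := hA.continuousAt.eventually_ne hAz
  rcases (hB.fun_div hA hAz).eventually_constant_or_nhds_le_map_nhds with hconst | hopen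
  · filter_upwards [hconst, hAne] with z hz hAz'
    simpa [hBz, hAz'] using hz
  · exfalso
    rw [hBz, zero_div] at hopen
    have himage : (fun z => B z / A z) ''
        {z | A z ≠ 0 ∧ ∀ r : ℝ, 0 < r → A z + r * B z ≠ 0} ∈ 𝓝 (0 : ℂ) :=
      hopen (image_mem_map (hAne.and hAB))
    have htendsto : Tendsto (fun r : ℝ => -(r : ℂ)) (𝓝[>] 0) (𝓝 0) :=
      ((by fun_prop : Continuous fun r : ℝ => -(r : ℂ)).tendsto' 0 0 (by simp)).mono_left
        nhdsWithin_le_nhds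
    obtain ⟨r, ⟨z, ⟨hAz', hne⟩, hquot⟩, hr⟩ :=
      ((htendsto.eventually himage).and self_mem_nhdsWithin).exists
    have hrpos : 0 < r := hr
    have hB' : B z = -(r : ℂ) * A z := (div_eq_iff hAz').1 hquot
    refine hne r⁻¹ (inv_pos.2 hrpos) ?_
    rw [hB', Complex.ofReal_inv]
    field_simp [Complex.ofReal_ne_zero.2 hrpos.ne']
    ring

lemma ne_zero_of_forall_add_ofReal_mul_ne_zero {A B : ℂ → ℂ} {U : Set ℂ} (hU : IsOpen U)
    (hUconn : IsPreconnected U) (hA : DifferentiableOn ℂ A U) (hB : DifferentiableOn ℂ B U)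
    {z₀ : ℂ} (hz₀ : z₀ ∈ U) (hB₀ : B z₀ ≠ 0)
    (hAB : ∀ z ∈ U, ∀ r : ℝ, 0 < r → A z + r * B z ≠ 0) {z : ℂ} (hz : z ∈ U) : B z ≠ 0 := by
  intro hBz
  have hAz : A z ≠ 0 := by simpa [hBz] using hAB z hz 1 one_pos
  have hBanalytic : AnalyticOnNhd ℂ B U := hB.analyticOnNhd hU
  have hlocal := eventually_eq_zero_of_forall_add_ofReal_mul_ne_zero
    (hA.analyticOnNhd hU z hz) (hBanalytic z hz) hAz hBz
    (Filter.mem_of_superset (hU.mem_nhds hz) hAB)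
  exact hB₀ (hBanalytic.eqOn_zero_of_preconnected_of_eventuallyEq_zero hUconn hz hlocal hz₀)

lemma ne_zero_and_ne_zero_of_forall_add_ofReal_mul_ne_zero {A B : ℂ → ℂ} {U : Set ℂ}
    (hU : IsOpen U) (hUconn : IsPreconnected U) (hA : DifferentiableOn ℂ A U)
    (hB : DifferentiableOn ℂ B U) {z₀ : ℂ} (hz₀ : z₀ ∈ U) (hA₀ : A z₀ ≠ 0) (hB₀ : B z₀ ≠ 0)
    (hAB : ∀ z ∈ U, ∀ r : ℝ, 0 < r → A z + r * B z ≠ 0) {z : ℂ} (hz : z ∈ U) :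
    A z ≠ 0 ∧ B z ≠ 0 := by
  have hBA : ∀ z ∈ U, ∀ r : ℝ, 0 < r → B z + r * A z ≠ 0 := fun z hz r hr h => by
    have hr' : (r : ℂ) ≠ 0 := Complex.ofReal_ne_zero.2 hr.ne'
    refine hAB z hz r⁻¹ (inv_pos.2 hr) ?_
    rw [Complex.ofReal_inv]
    field_simp
    linear_combination h
  exact ⟨ne_zero_of_forall_add_ofReal_mul_ne_zero hU hUconn hB hA hz₀ hA₀ hBA hz,
    ne_zero_of_forall_add_ofReal_mul_ne_zero hU hUconn hA hB hz₀ hB₀ hAB hz⟩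

lemma mul_norm_logDeriv_sub_logDeriv_le {α : ℝ} (hα0 : 0 < α)
    {H G : ℂ → ℂ} {N P : ℝ} (hN : 0 < N) (hP : 0 < P) (hH0 : H 0 = N) (hG0 : G 0 = P)
    (hH : DifferentiableOn ℂ H (horizontalStrip (α * Real.pi)))
    (hG : DifferentiableOn ℂ G (horizontalStrip (α * Real.pi)))
    (hne : ∀ ζ ∈ horizontalStrip (α * Real.pi), ∀ z, inSector (2 * α) z → H ζ + z * G ζ ≠ 0) :
    α * ‖logDeriv H 0 - logDeriv G 0‖ ≤ 1 - α := by
  set U : Set ℂ := horizontalStrip (α * Real.pi)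
  have hαπ : 0 < α * Real.pi := mul_pos hα0 Real.pi_pos
  have hU0 : (0 : ℂ) ∈ U := zero_mem_horizontalStrip hαπ
  have hUopen : IsOpen U := isOpen_horizontalStrip _
  have hH0ne : H 0 ≠ 0 := by simpa [hH0] using hN.ne'
  have hG0ne : G 0 ≠ 0 := by simpa [hG0] using hP.ne'
  have hHG : ∀ ζ ∈ U, H ζ ≠ 0 ∧ G ζ ≠ 0 := fun ζ =>
    ne_zero_and_ne_zero_of_forall_add_ofReal_mul_ne_zero hUopen
      (convex_horizontalStrip _).isPreconnected hH hG hU0 hH0ne hG0ne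
      fun ζ hζ r hr => hne ζ hζ r (inSector_ofReal (by positivity) hr)
  have harg : ∀ ζ ∈ U, |(H ζ / G ζ).arg| ≤ Real.pi - α * Real.pi := fun ζ hζ =>
    (abs_arg_div_le_of_forall_add_mul_ne_zero (hHG ζ hζ).1 (hHG ζ hζ).2 (hne ζ hζ)).trans_eq
      (by ring)
  have hslit : ∀ ζ ∈ U, H ζ / G ζ ∈ Complex.slitPlane := fun ζ hζ =>
    mem_slitPlane_of_abs_arg_lt_pi (div_ne_zero (hHG ζ hζ).1 (hHG ζ hζ).2)
      ((harg ζ hζ).trans_lt (sub_lt_self _ hαπ))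
  have hderiv : deriv (fun ζ => Complex.log (H ζ / G ζ)) 0 = logDeriv H 0 - logDeriv G 0 := by
    have hHd := hH.differentiableAt (hUopen.mem_nhds hU0)
    have hGd := hG.differentiableAt (hUopen.mem_nhds hU0)
    rw [← logDeriv_div 0 hH0ne hG0ne hHd hGd]
    exact ((hHd.fun_div hGd hG0ne).hasDerivAt.clog (hslit 0 hU0)).deriv
  have hbound : ‖deriv (fun ζ => Complex.log (H ζ / G ζ)) 0‖
      ≤ (Real.pi - α * Real.pi) / (α * Real.pi) :=
    norm_deriv_le_div_of_abs_im_le hαπ ((hH.div hG fun ζ hζ => (hHG ζ hζ).2).clog hslit)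
      (fun ζ hζ => by simpa only [Complex.log_im] using harg ζ hζ) (by
        rw [Complex.log_im, hH0, hG0, ← Complex.ofReal_div,
          Complex.arg_ofReal_of_nonneg (by positivity)])
  rw [hderiv, le_div_iff₀ hαπ] at hbound
  refine le_of_mul_le_mul_right ?_ Real.pi_pos
  linarith

lemma sum_mul_sum_mul_comm {R Ω ι : Type*} [CommSemiring R] (t : Finset Ω) (s : Finset ι)
    (a : Ω → R) (v : ι → R) (Y : ι → Ω → R) :
    ∑ ω ∈ t, a ω * ∑ i ∈ s, v i * Y i ω = ∑ i ∈ s, v i * ∑ ω ∈ t, a ω * Y i ω := by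
  simp only [Finset.mul_sum]
  rw [Finset.sum_comm]
  simp only [mul_left_comm]

section Weights

variable {Ω : Type*} [Fintype Ω]

/-- The exponential sum `∑ a_ω e^{ζ X_ω}`: the moment generating function of `X` under the
weight `a`, at a complex parameter. -/
noncomputable def expSum (a X : Ω → ℝ) (ζ : ℂ) : ℂ := ∑ ω, (a ω : ℂ) * Complex.exp (ζ * X ω)

lemma expSum_zero (a X : Ω → ℝ) : expSum a X 0 = ((∑ ω, a ω : ℝ) : ℂ) := by simp [expSum]

lemma differentiable_expSum (a X : Ω → ℝ) : Differentiable ℂ (expSum a X) := by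
  unfold expSum
  fun_prop

lemma deriv_expSum_zero (a X : Ω → ℝ) :
    deriv (expSum a X) 0 = ((∑ ω, a ω * X ω : ℝ) : ℂ) := by
  have hterm : ∀ ω, HasDerivAt (fun ζ : ℂ => (a ω : ℂ) * Complex.exp (ζ * X ω))
      (a ω * X ω : ℂ) 0 := fun ω =>
    ((((hasDerivAt_id' (0 : ℂ)).mul_const (X ω : ℂ)).cexp).const_mul (a ω : ℂ)).congr_deriv
      (by simp)
  push_cast
  exact (HasDerivAt.fun_sum fun ω (_ : ω ∈ univ) => hterm ω).deriv

lemma mul_abs_sub_le_of_expSum_ne_zero {α : ℝ} (hα0 : 0 < α) {a b : Ω → ℝ} (ha : ∀ ω, 0 ≤ a ω)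
    (hb : ∀ ω, 0 ≤ b ω) (X : Ω → ℝ)
    (hne : ∀ ζ ∈ horizontalStrip (α * Real.pi), ∀ z, inSector (2 * α) z →
      expSum a X ζ + z * expSum b X ζ ≠ 0) :
    α * |(∑ ω, b ω) * ∑ ω, a ω * X ω - (∑ ω, a ω) * ∑ ω, b ω * X ω|
      ≤ (1 - α) * ((∑ ω, b ω) * ∑ ω, a ω) := by
  have hdegenerate : ∀ c : Ω → ℝ, (∀ ω, 0 ≤ c ω) → 0 = ∑ ω, c ω → ∑ ω, c ω * X ω = 0 :=
    fun c hc h0 => Finset.sum_eq_zero fun ω hω => by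
      rw [(Finset.sum_eq_zero_iff_of_nonneg fun ω _ => hc ω).1 h0.symm ω hω, zero_mul]
  rcases (Finset.sum_nonneg fun ω (_ : ω ∈ univ) => ha ω).eq_or_lt with hN | hN
  · simp [hdegenerate a ha hN, ← hN]
  rcases (Finset.sum_nonneg fun ω (_ : ω ∈ univ) => hb ω).eq_or_lt with hP | hP
  · simp [hdegenerate b hb hP, ← hP]
  have hlog := mul_norm_logDeriv_sub_logDeriv_le hα0 hN hP (expSum_zero a X) (expSum_zero b X)
    (differentiable_expSum a X).differentiableOn (differentiable_expSum b X).differentiableOn hne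
  simp only [logDeriv_apply, deriv_expSum_zero, expSum_zero, ← Complex.ofReal_div,
    ← Complex.ofReal_sub, Complex.norm_real, Real.norm_eq_abs] at hlog
  rw [div_sub_div _ _ hN.ne' hP.ne', abs_div, abs_of_pos (mul_pos hN hP), ← mul_div_assoc,
    div_le_iff₀ (mul_pos hN hP)] at hlog
  simpa only [mul_comm (∑ ω, b ω)] using hlog

/-- The covariance of `X` and `Y` under the weight `w`, multiplied by the square of the total
mass: this avoids normalizing `w` to a probability. -/
def weightedCov (w X Y : Ω → ℝ) : ℝ :=
  (∑ ω, w ω) * ∑ ω, w ω * (X ω * Y ω) - (∑ ω, w ω * X ω) * ∑ ω, w ω * Y ω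

lemma weightedCov_comm (w X Y : Ω → ℝ) : weightedCov w X Y = weightedCov w Y X := by
  simp only [weightedCov, mul_comm]

lemma weightedCov_sum_right {ι : Type*} (s : Finset ι) (w X : Ω → ℝ) (v : ι → ℝ)
    (Y : ι → Ω → ℝ) :
    weightedCov w X (fun ω => ∑ i ∈ s, v i * Y i ω) = ∑ i ∈ s, v i * weightedCov w X (Y i) := by
  simp only [weightedCov, ← mul_assoc (w _)]
  rw [sum_mul_sum_mul_comm univ s, sum_mul_sum_mul_comm univ s]
  simp only [mul_sub, Finset.sum_sub_distrib, Finset.mul_sum (s := s), mul_left_comm (v _)]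

lemma weightedCov_sum_left {ι : Type*} (s : Finset ι) (w Y : Ω → ℝ) (v : ι → ℝ)
    (X : ι → Ω → ℝ) :
    weightedCov w (fun ω => ∑ i ∈ s, v i * X i ω) Y = ∑ i ∈ s, v i * weightedCov w (X i) Y := by
  simp only [weightedCov_comm w _ Y, weightedCov_sum_right]

lemma weightedCov_const_mul_right (r : ℝ) (w X Y : Ω → ℝ) :
    weightedCov w X (fun ω => r * Y ω) = r * weightedCov w X Y := by
  simpa only [Finset.sum_singleton] using
    weightedCov_sum_right {()} w X (fun _ => r) (fun _ => Y)

lemma weightedCov_const_mul_left (r : ℝ) (w X Y : Ω → ℝ) :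
    weightedCov w (fun ω => r * X ω) Y = r * weightedCov w X Y := by
  simp only [weightedCov_comm w _ Y, weightedCov_const_mul_right]

lemma weightedCov_self_nonneg {w : Ω → ℝ} (hw : ∀ ω, 0 ≤ w ω) (X : Ω → ℝ) :
    0 ≤ weightedCov w X X := by
  have hcauchy := Finset.sum_sq_le_sum_mul_sum_of_sq_le_mul univ (fun ω _ => hw ω)
    (fun ω _ => mul_nonneg (hw ω) (mul_self_nonneg (X ω)))
    (fun ω _ => (by ring : (w ω * X ω) ^ 2 = w ω * (w ω * (X ω * X ω))).le)
  simp only [weightedCov]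
  linarith

lemma weightedCov_self_le (w X : Ω → ℝ) :
    weightedCov w X X ≤ (∑ ω, w ω) * ∑ ω, w ω * X ω ^ 2 := by
  simp only [weightedCov, ← pow_two]
  linarith [sq_nonneg (∑ ω, w ω * X ω)]

lemma concaveOn_log_sum {D : Set ℝ} (hD : Convex ℝ D) {w A B : Ω → ℝ → ℝ}
    (hw : ∀ t ∈ D, ∀ ω, HasDerivAt (w ω) (w ω t * A ω t) t)
    (hA : ∀ t ∈ D, ∀ ω, HasDerivAt (A ω) (B ω t) t)
    (hpos : ∀ t ∈ D, 0 < ∑ ω, w ω t)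
    (hcov : ∀ t ∈ D, weightedCov (w · t) (A · t) (A · t)
      ≤ -((∑ ω, w ω t) * ∑ ω, w ω t * B ω t)) :
    ConcaveOn ℝ D fun t => Real.log (∑ ω, w ω t) := by
  have hF : ∀ t ∈ D, HasDerivAt (fun t => ∑ ω, w ω t) (∑ ω, w ω t * A ω t) t := fun t ht =>
    HasDerivAt.fun_sum fun ω _ => hw t ht ω
  have hF' : ∀ t ∈ D, HasDerivAt (fun t => ∑ ω, w ω t * A ω t)
      (∑ ω, (w ω t * A ω t * A ω t + w ω t * B ω t)) t := fun t ht =>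
    HasDerivAt.fun_sum fun ω _ => (hw t ht ω).mul (hA t ht ω)
  refine concaveOn_of_hasDerivWithinAt2_nonpos hD
    (fun t ht => ((hF t ht).log (hpos t ht).ne').continuousAt.continuousWithinAt)
    (fun t ht => have ht := interior_subset ht
      ((hF t ht).log (hpos t ht).ne').hasDerivWithinAt)
    (fun t ht => have ht := interior_subset ht
      ((hF' t ht).fun_div (hF t ht) (hpos t ht).ne').hasDerivWithinAt)
    fun t ht => div_nonpos_of_nonpos_of_nonneg ?_ (sq_nonneg _)
  have h := hcov t (interior_subset ht)
  simp only [weightedCov, ← mul_assoc] at h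
  rw [Finset.sum_add_distrib]
  linarith

end Weights

lemma sum_sum_mul_le_sum_sq_mul_sum_abs {ι : Type*} (s : Finset ι) {C : ι → ι → ℝ}
    (hC : ∀ i j, C i j = C j i) (v : ι → ℝ) :
    ∑ i ∈ s, v i * ∑ j ∈ s, v j * C i j ≤ ∑ i ∈ s, v i ^ 2 * ∑ j ∈ s, |C i j| := by
  have hterm : ∀ i j, v i * (v j * C i j) ≤ v i ^ 2 * |C i j| / 2 + v j ^ 2 * |C j i| / 2 :=
    fun i j => by
      have hprod : v i * v j * C i j ≤ |v i| * |v j| * |C i j| := by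
        simpa only [abs_mul] using le_abs_self (v i * v j * C i j)
      have hamgm : 2 * |v i| * |v j| ≤ v i ^ 2 + v j ^ 2 := by
        simpa only [sq_abs] using two_mul_le_add_sq |v i| |v j|
      rw [hC j i]
      linarith [mul_le_mul_of_nonneg_right hamgm (abs_nonneg (C i j))]
  calc ∑ i ∈ s, v i * ∑ j ∈ s, v j * C i j
      = ∑ i ∈ s, ∑ j ∈ s, v i * (v j * C i j) := by simp only [Finset.mul_sum]
    _ ≤ ∑ i ∈ s, ∑ j ∈ s, (v i ^ 2 * |C i j| / 2 + v j ^ 2 * |C j i| / 2) :=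
        Finset.sum_le_sum fun i _ => Finset.sum_le_sum fun j _ => hterm i j
    _ = ∑ i ∈ s, ∑ j ∈ s, v i ^ 2 * |C i j| := by
        simp only [Finset.sum_add_distrib]
        rw [Finset.sum_comm (f := fun i j => v j ^ 2 * |C j i| / 2)]
        simp only [← Finset.sum_add_distrib, add_halves]
    _ = ∑ i ∈ s, v i ^ 2 * ∑ j ∈ s, |C i j| := by simp only [Finset.mul_sum]

lemma concaveOn_of_forall_concaveOn_comp_lineMap {E : Type*} [AddCommGroup E] [Module ℝ E]
    {s : Set E} {f : E → ℝ} (hs : Convex ℝ s)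
    (h : ∀ x ∈ s, ∀ y ∈ s, ConcaveOn ℝ (Set.Icc 0 1) fun t : ℝ => f (AffineMap.lineMap x y t)) :
    ConcaveOn ℝ s f := by
  refine ⟨hs, fun x hx y hy a b ha hb hab => ?_⟩
  have hseg := (h x hx y hy).2 (Set.left_mem_Icc.2 zero_le_one) (Set.right_mem_Icc.2 zero_le_one)
    ha hb hab
  have hpoint : AffineMap.lineMap x y (a • (0 : ℝ) + b • (1 : ℝ)) = a • x + b • y := by
    rw [AffineMap.lineMap_apply_module, eq_sub_of_add_eq hab]
    simp
  simpa only [AffineMap.lineMap_apply_zero, AffineMap.lineMap_apply_one, hpoint] using hseg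

section Polynomial

variable {ι : Type*}

/-- `Γ_β`-stability of the multiaffine polynomial `∑ c_S z^S`, encoded by its coefficients. -/
def SectorStable [Fintype ι] (β : ℝ) (c : Finset ι → ℝ) : Prop :=
  ∀ z : ι → ℂ, (∀ i, inSector β (z i)) → ∑ S : Finset ι, (c S : ℂ) * ∏ i ∈ S, z i ≠ 0

/-- The random variable `1_{i ∈ S}` on the random set `S`. -/
def memIndicator [DecidableEq ι] (i : ι) (S : Finset ι) : ℝ := if i ∈ S then 1 else 0

section

variable [DecidableEq ι] (i : ι) (S : Finset ι)

lemma memIndicator_nonneg : 0 ≤ memIndicator i S := by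
  unfold memIndicator
  split_ifs <;> norm_num

lemma memIndicator_le_one : memIndicator i S ≤ 1 := by
  unfold memIndicator
  split_ifs <;> norm_num

lemma memIndicator_mul_self : memIndicator i S * memIndicator i S = memIndicator i S := by
  simp [memIndicator]

lemma sum_mem_eq_sum_mul_memIndicator [Fintype ι] (v : ι → ℝ) :
    ∑ j ∈ S, v j = ∑ j, v j * memIndicator j S := by
  simp [memIndicator]

end

namespace SectorStable

variable [Fintype ι] {α β : ℝ} {c : Finset ι → ℝ}

lemma mul_prod (h : SectorStable β c) {r : ι → ℝ} (hr : ∀ i, 0 < r i) :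
    SectorStable β fun S => c S * ∏ i ∈ S, r i := fun z hz => by
  have hscaled := h (fun i => r i * z i) fun i => inSector_ofReal_mul (hr i) (hz i)
  simpa only [Complex.ofReal_mul, Complex.ofReal_prod, mul_assoc, ← Finset.prod_mul_distrib]
    using hscaled

lemma sum_mul_prod_pos (hβ : 0 < β) (hc : ∀ S, 0 ≤ c S) (h : SectorStable β c) {r : ι → ℝ}
    (hr : ∀ i, 0 < r i) : 0 < ∑ S, c S * ∏ i ∈ S, r i := by
  have hnonneg : 0 ≤ ∑ S, c S * ∏ i ∈ S, r i := Finset.sum_nonneg fun S _ =>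
    mul_nonneg (hc S) (Finset.prod_nonneg fun i _ => (hr i).le)
  refine hnonneg.lt_of_ne' ?_
  exact_mod_cast h (fun i => r i) fun i => inSector_ofReal hβ (hr i)

section

variable [DecidableEq ι]

lemma expSum_add_mul_expSum_ne_zero (h : SectorStable (2 * α) c) (i : ι) {s : ι → ℝ}
    (hsi : s i = 0) (hs : ∀ j, |s j| ≤ 1) {ζ : ℂ} (hζ : ζ ∈ horizontalStrip (α * Real.pi))
    {z : ℂ} (hz : inSector (2 * α) z) :
    expSum (fun S => c S * (1 - memIndicator i S)) (fun S => ∑ j ∈ S, s j) ζ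
      + z * expSum (fun S => c S * memIndicator i S) (fun S => ∑ j ∈ S, s j) ζ ≠ 0 := by
  have hexp : ∀ j, inSector (2 * α) (Complex.exp (ζ * s j)) := fun j => by
    refine inSector_exp ?_
    calc |(ζ * s j).im| = |ζ.im| * |s j| := by rw [Complex.im_mul_ofReal, abs_mul]
      _ ≤ |ζ.im| := mul_le_of_le_one_right (abs_nonneg _) (hs j)
      _ < 2 * α * Real.pi / 2 := by linarith [hζ.out]
  have hpoint : ∀ j, inSector (2 * α) ((if i = j then z else 1) * Complex.exp (ζ * s j)) :=
    fun j => by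
      split_ifs with hij
      · subst hij
        simpa [hsi] using hz
      · simpa using hexp j
  convert h _ hpoint using 1
  rw [expSum, expSum, Finset.mul_sum, ← Finset.sum_add_distrib]
  refine Finset.sum_congr rfl fun S _ => ?_
  rw [Finset.prod_mul_distrib, Finset.prod_ite_eq, ← Complex.exp_sum, ← Finset.mul_sum,
    memIndicator]
  split_ifs <;> push_cast <;> ring

lemma mul_abs_weightedCov_le (hα0 : 0 < α) (hc : ∀ S, 0 ≤ c S) (h : SectorStable (2 * α) c)
    (i : ι) {s : ι → ℝ} (hsi : s i = 0) (hs : ∀ j, |s j| ≤ 1) :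
    α * |weightedCov c (memIndicator i) fun S => ∑ j ∈ S, s j|
      ≤ (1 - α) * weightedCov c (memIndicator i) (memIndicator i) := by
  have hbound := mul_abs_sub_le_of_expSum_ne_zero hα0
    (fun S => mul_nonneg (hc S) (sub_nonneg.2 (memIndicator_le_one i S)))
    (fun S => mul_nonneg (hc S) (memIndicator_nonneg i S)) (fun S => ∑ j ∈ S, s j)
    fun ζ hζ z hz => h.expSum_add_mul_expSum_ne_zero i hsi hs hζ hz
  simp only [mul_sub, sub_mul, mul_one, Finset.sum_sub_distrib] at hbound
  rw [abs_sub_comm] at hbound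
  simp only [weightedCov, memIndicator_mul_self, ← mul_assoc (c _)]
  convert hbound using 3 <;> ring

lemma mul_sum_abs_weightedCov_le (hα0 : 0 < α) (hc : ∀ S, 0 ≤ c S)
    (h : SectorStable (2 * α) c) (i : ι) :
    α * ∑ j, |weightedCov c (memIndicator i) (memIndicator j)|
      ≤ weightedCov c (memIndicator i) (memIndicator i) := by
  set K : ι → ℝ := fun j => weightedCov c (memIndicator i) (memIndicator j)
  set s : ι → ℝ := Function.update (fun j => (SignType.sign (K j) : ℝ)) i 0 with hs
  have hsi : s i = 0 := Function.update_self ..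
  have hs1 : ∀ j, |s j| ≤ 1 := fun j => by
    rcases eq_or_ne j i with rfl | hj
    · simp [hsi]
    · rw [hs, Function.update_of_ne hj]
      cases SignType.sign (K j) <;> simp
  have hKs : weightedCov c (memIndicator i) (fun S => ∑ j ∈ S, s j)
      = ∑ j ∈ univ.erase i, |K j| := by
    simp_rw [sum_mem_eq_sum_mul_memIndicator _ s]
    rw [weightedCov_sum_right, ← Finset.add_sum_erase _ _ (mem_univ i), hsi, zero_mul, zero_add]
    refine Finset.sum_congr rfl fun j hj => ?_
    rw [hs, Function.update_of_ne (ne_of_mem_erase hj)]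
    exact sign_mul_self (K j)
  have hbound := h.mul_abs_weightedCov_le hα0 hc i hsi hs1
  rw [hKs] at hbound
  rw [← Finset.add_sum_erase _ _ (mem_univ i), abs_of_nonneg (weightedCov_self_nonneg hc _)]
  linarith [mul_le_mul_of_nonneg_left (le_abs_self (∑ j ∈ univ.erase i, |K j|)) hα0.le]

end

lemma mul_weightedCov_sum_le (hα0 : 0 < α) (hc : ∀ S, 0 ≤ c S) (h : SectorStable (2 * α) c)
    (v : ι → ℝ) :
    α * weightedCov c (fun S => ∑ i ∈ S, v i) (fun S => ∑ i ∈ S, v i)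
      ≤ (∑ S, c S) * ∑ S, c S * ∑ i ∈ S, v i ^ 2 := by
  classical
  set K : ι → ι → ℝ := fun i j => weightedCov c (memIndicator i) (memIndicator j) with hK
  calc α * weightedCov c (fun S => ∑ i ∈ S, v i) (fun S => ∑ i ∈ S, v i)
      = α * ∑ i, v i * ∑ j, v j * K i j := by
        simp_rw [sum_mem_eq_sum_mul_memIndicator _ v, weightedCov_sum_left, weightedCov_sum_right,
          hK]
    _ ≤ α * ∑ i, v i ^ 2 * ∑ j, |K i j| := by
        refine mul_le_mul_of_nonneg_left ?_ hα0.le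
        exact sum_sum_mul_le_sum_sq_mul_sum_abs _ (fun i j => weightedCov_comm c _ _) v
    _ = ∑ i, v i ^ 2 * (α * ∑ j, |K i j|) := by
        simp only [Finset.mul_sum, mul_left_comm]
    _ ≤ ∑ i, v i ^ 2 * ((∑ S, c S) * ∑ S, c S * memIndicator i S) := by
        refine Finset.sum_le_sum fun i _ => mul_le_mul_of_nonneg_left ?_ (sq_nonneg _)
        refine (h.mul_sum_abs_weightedCov_le hα0 hc i).trans ?_
        simpa only [pow_two, memIndicator_mul_self] using weightedCov_self_le c (memIndicator i)
    _ = (∑ S, c S) * ∑ S, c S * ∑ i ∈ S, v i ^ 2 := by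
        simp_rw [sum_mem_eq_sum_mul_memIndicator _ (v · ^ 2)]
        rw [sum_mul_sum_mul_comm, Finset.mul_sum]
        exact Finset.sum_congr rfl fun i _ => mul_left_comm _ _ _

end SectorStable

lemma hasDerivAt_lineMap_rpow (α : ℝ) {x y t : ℝ} (h : 0 < AffineMap.lineMap x y t) :
    HasDerivAt (fun t => AffineMap.lineMap x y t ^ α)
      (AffineMap.lineMap x y t ^ α * (α * ((y - x) / AffineMap.lineMap x y t))) t := by
  refine (AffineMap.hasDerivAt_lineMap.rpow_const (p := α) (Or.inl h.ne')).congr_deriv ?_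
  rw [Real.rpow_sub_one h.ne']
  ring

lemma hasDerivAt_prod_lineMap_rpow (α : ℝ) (S : Finset ι) {x y : ι → ℝ} {t : ℝ}
    (h : ∀ i, 0 < AffineMap.lineMap (x i) (y i) t) :
    HasDerivAt (fun t => ∏ i ∈ S, AffineMap.lineMap (x i) (y i) t ^ α)
      ((∏ i ∈ S, AffineMap.lineMap (x i) (y i) t ^ α) *
        (α * ∑ i ∈ S, (y i - x i) / AffineMap.lineMap (x i) (y i) t)) t := by
  classical
  refine (HasDerivAt.fun_finsetProd fun i _ => hasDerivAt_lineMap_rpow α (h i)).congr_deriv ?_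
  simp only [Finset.mul_sum, smul_eq_mul]
  refine Finset.sum_congr rfl fun i hi => ?_
  rw [← Finset.mul_prod_erase S _ hi]
  ring

lemma hasDerivAt_div_lineMap {x y t : ℝ} (h : AffineMap.lineMap x y t ≠ 0) :
    HasDerivAt (fun t => (y - x) / AffineMap.lineMap x y t)
      (-((y - x) / AffineMap.lineMap x y t) ^ 2) t := by
  refine ((hasDerivAt_const t (y - x)).fun_div AffineMap.hasDerivAt_lineMap h).congr_deriv ?_
  ring

lemma convex_setOf_forall_pos : Convex ℝ {x : ι → ℝ | ∀ i, 0 < x i} := by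
  simpa only [Set.pi, Set.mem_univ, true_imp_iff, Set.mem_Ioi] using
    convex_pi (s := Set.univ) fun (_ : ι) _ => convex_Ioi (0 : ℝ)

theorem fractionally_log_concave_of_sector_stable_general [Fintype ι] {α : ℝ} (hα0 : 0 < α)
    {c : Finset ι → ℝ} (hc : ∀ S, 0 ≤ c S) (hstable : SectorStable (2 * α) c) :
    ConcaveOn ℝ {x : ι → ℝ | ∀ i, 0 < x i}
      (fun x => Real.log (∑ S : Finset ι, c S * ∏ i ∈ S, x i ^ α)) := by
  refine concaveOn_of_forall_concaveOn_comp_lineMap convex_setOf_forall_pos fun x hx y hy => ?_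
  set X : ι → ℝ → ℝ := fun i t => AffineMap.lineMap (x i) (y i) t
  set V : ι → ℝ → ℝ := fun i t => (y i - x i) / X i t
  have hXpos : ∀ t ∈ Set.Icc (0 : ℝ) 1, ∀ i, 0 < X i t := fun t ht i =>
    (convex_Ioi (0 : ℝ)).lineMap_mem (hx i) (hy i) ht
  have hpow : ∀ t ∈ Set.Icc (0 : ℝ) 1, ∀ i, 0 < X i t ^ α := fun t ht i =>
    Real.rpow_pos_of_pos (hXpos t ht i) α
  simp only [AffineMap.pi_lineMap_apply]
  refine concaveOn_log_sum (convex_Icc 0 1) (A := fun S t => α * ∑ i ∈ S, V i t)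
    (B := fun S t => α * ∑ i ∈ S, -V i t ^ 2)
    (fun t ht S => ?_) (fun t ht S => ?_) (fun t ht => ?_) (fun t ht => ?_)
  · simpa only [mul_assoc] using
      (hasDerivAt_prod_lineMap_rpow α S (hXpos t ht)).const_mul (c S)
  · exact (HasDerivAt.fun_sum fun i _ => hasDerivAt_div_lineMap (hXpos t ht i).ne').const_mul α
  · exact hstable.sum_mul_prod_pos (by positivity) hc (hpow t ht)
  · have hcov := (hstable.mul_prod (hpow t ht)).mul_weightedCov_sum_le hα0
      (fun S => mul_nonneg (hc S) (Finset.prod_nonneg fun i _ => (hpow t ht i).le)) (V · t)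
    rw [weightedCov_const_mul_left, weightedCov_const_mul_right]
    refine (mul_le_mul_of_nonneg_left hcov hα0.le).trans_eq ?_
    simp only [Finset.sum_neg_distrib, mul_neg, mul_left_comm _ α, ← Finset.mul_sum, neg_neg, X]

end Polynomial

/-- A `Γ_{2α}`-sector-stable multiaffine polynomial `f = Σ_S c_S z^S` with nonnegative
coefficients, not identically zero, is `α`-fractionally log-concave:
`x ↦ log f(x₁^α, …, xₙ^α)` is concave on the positive orthant. -/
theorem fractionally_log_concave_of_sector_stable (n : ℕ) (α : ℝ)
    (hα0 : 0 < α) (hα : α ≤ 1 / 2)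
    (c : Finset (Fin n) → ℝ) (hc : ∀ S, 0 ≤ c S) (hne : ∃ S, c S ≠ 0)
    (hstable : ∀ z : Fin n → ℂ, (∀ i, inSector (2 * α) (z i)) →
      (∑ S : Finset (Fin n), (c S : ℂ) * ∏ i ∈ S, z i) ≠ 0) :
    ConcaveOn ℝ {x : Fin n → ℝ | ∀ i, 0 < x i}
      (fun x => Real.log (∑ S : Finset (Fin n), c S * ∏ i ∈ S, x i ^ α)) :=
  fractionally_log_concave_of_sector_stable_general hα0 hc hstable
end

section
/- Let α ∈ (0,1] and let μ be a probability distribution on subsets of [n] such that both the generating polynomial of μ and the generating polynomial of its dual μ* (defined by μ*(S) = μ([n]∖S)) are α-fractionally log-concave. Then (α/2) · Σ_{i=1}^{n} H_b(μ(i)) ≤ H(μ) ≤ Σ_{i=1}^{n} H_b(μ(i)), where μ(i) = Pr_{S∼μ}[i ∈ S] and H_b(p) = p log(1/p) + (1−p) log(1/(1−p)) is the binary entropy, with 0·log(1/0) = 0. -/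
open Finset

/-!
For `S ∼ μ` with inclusion probabilities `p`, the random vector with coordinates `𝟙[i ∈ S] / p i`
has mean `1`, where the generating polynomial equals `1`. Jensen's inequality for this vector, with
the polynomial at the vector of `S` bounded below by its single monomial `S`, gives
`α * ∑ i, p i * log (1 / p i) ≤ H(μ)`; since concavity is only available at positive vectors, one
uses `(𝟙[i ∈ S] + ε) / (p i + ε)` and lets `ε → 0`. The dual has inclusion probabilities `1 - p` and
the same entropy, so averaging the two bounds yields the factor `α / 2`. The upper bound is Gibbs'
inequality against the product distribution with the same inclusion probabilities.
-/

section ShannonEntropy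

variable {κ : Type*} [Fintype κ]

/-- The Shannon entropy `∑ k, μ k * log (1 / μ k)`, in nats, of a weight function on a finite
type. -/
noncomputable def shannonEntropy (μ : κ → ℝ) : ℝ := ∑ k, Real.negMulLog (μ k)

lemma negMulLog_add_mul_log_le_sub {x y : ℝ} (hx : 0 ≤ x) (hy : 0 ≤ y) (hxy : y = 0 → x = 0) :
    Real.negMulLog x + x * Real.log y ≤ y - x := by
  rcases hx.eq_or_lt with rfl | hx_pos
  · simpa using hy
  · have hy_ne : y ≠ 0 := fun h ↦ hx_pos.ne' (hxy h)
    have hy_pos : 0 < y := hy.lt_of_ne' hy_ne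
    calc Real.negMulLog x + x * Real.log y
        = x * Real.log (y / x) := by
          rw [Real.log_div hy_ne hx_pos.ne', Real.negMulLog]; ring
      _ ≤ x * (y / x - 1) := by gcongr; exact Real.log_le_sub_one_of_pos (div_pos hy_pos hx_pos)
      _ = y - x := by field_simp

lemma shannonEntropy_le_neg_sum_mul_log {μ ν : κ → ℝ} (hμ : ∀ k, 0 ≤ μ k) (hν : ∀ k, 0 ≤ ν k)
    (hsum : ∑ k, ν k ≤ ∑ k, μ k) (hac : ∀ k, ν k = 0 → μ k = 0) :
    shannonEntropy μ ≤ -∑ k, μ k * Real.log (ν k) := by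
  have h := sum_le_sum fun k (_ : k ∈ univ) ↦ negMulLog_add_mul_log_le_sub (hμ k) (hν k) (hac k)
  rw [sum_add_distrib, sum_sub_distrib] at h
  rw [shannonEntropy]
  linarith

end ShannonEntropy

section SubsetDistribution

variable {ι : Type*} [Fintype ι] {μ : Finset ι → ℝ} {i : ι} {S : Finset ι}

section InclusionProb

variable [DecidableEq ι]

/-- The marginal `Pr[i ∈ S]` of a weight function `μ` on finite sets. -/
def inclusionProb (μ : Finset ι → ℝ) (i : ι) : ℝ := ∑ S with i ∈ S, μ S

/-- The dual distribution `μ*`, the law of the complement of a set drawn from `μ`. -/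
def dualDistribution (μ : Finset ι → ℝ) (S : Finset ι) : ℝ := μ Sᶜ

lemma inclusionProb_nonneg (hμ : ∀ S, 0 ≤ μ S) (i : ι) : 0 ≤ inclusionProb μ i :=
  sum_nonneg fun S _ ↦ hμ S

lemma le_inclusionProb (hμ : ∀ S, 0 ≤ μ S) (hi : i ∈ S) : μ S ≤ inclusionProb μ i :=
  single_le_sum (f := μ) (fun T _ ↦ hμ T) (by simpa using hi)

lemma sum_mul_sum_eq_sum_inclusionProb_mul (μ : Finset ι → ℝ) (f : ι → ℝ) :
    ∑ S, μ S * ∑ i ∈ S, f i = ∑ i, inclusionProb μ i * f i := by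
  simp_rw [inclusionProb, mul_sum, sum_mul]
  exact sum_comm' (by simp)

lemma sum_comp_compl {M : Type*} [AddCommMonoid M] (f : Finset ι → M) :
    ∑ S, f Sᶜ = ∑ S, f S :=
  (compl_involutive (α := Finset ι)).bijective.sum_comp f

lemma dualDistribution_mem_stdSimplex (hμ : μ ∈ stdSimplex ℝ (Finset ι)) :
    dualDistribution μ ∈ stdSimplex ℝ (Finset ι) :=
  ⟨fun S ↦ hμ.1 Sᶜ, (sum_comp_compl μ).trans hμ.2⟩

lemma shannonEntropy_dualDistribution (μ : Finset ι → ℝ) :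
    shannonEntropy (dualDistribution μ) = shannonEntropy μ :=
  sum_comp_compl fun S ↦ Real.negMulLog (μ S)

lemma inclusionProb_dualDistribution (hμ : ∑ S, μ S = 1) (i : ι) :
    inclusionProb (dualDistribution μ) i = 1 - inclusionProb μ i := by
  have hcompl : inclusionProb (dualDistribution μ) i = ∑ S with i ∉ S, μ S := by
    simp_rw [inclusionProb, dualDistribution, sum_filter]
    rw [← sum_comp_compl]
    simp
  rw [hcompl, inclusionProb, ← hμ, ← sum_filter_add_sum_filter_not univ (i ∈ ·),
    add_sub_cancel_left]

lemma inclusionProb_le_one (hμ : μ ∈ stdSimplex ℝ (Finset ι)) (i : ι) : inclusionProb μ i ≤ 1 := by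
  have h := inclusionProb_nonneg (dualDistribution_mem_stdSimplex hμ).1 i
  rwa [inclusionProb_dualDistribution hμ.2, sub_nonneg] at h

lemma inclusionProb_ne_zero (hμ : ∀ S, 0 ≤ μ S) (hS : μ S ≠ 0) (hi : i ∈ S) :
    inclusionProb μ i ≠ 0 :=
  (((hμ S).lt_of_ne' hS).trans_le (le_inclusionProb hμ hi)).ne'

lemma one_sub_inclusionProb_ne_zero (hμ : μ ∈ stdSimplex ℝ (Finset ι)) (hS : μ S ≠ 0)
    (hi : i ∉ S) : 1 - inclusionProb μ i ≠ 0 := by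
  rw [← inclusionProb_dualDistribution hμ.2]
  exact inclusionProb_ne_zero (S := Sᶜ) (dualDistribution_mem_stdSimplex hμ).1
    (by rwa [dualDistribution, compl_compl]) (mem_compl.2 hi)

/-- The law of a random set containing each `i` independently with probability `p i`. -/
def productDistribution (p : ι → ℝ) (S : Finset ι) : ℝ := (∏ i ∈ S, p i) * ∏ i ∈ Sᶜ, (1 - p i)

lemma sum_productDistribution (p : ι → ℝ) : ∑ S, productDistribution p S = 1 := by
  have h := prod_add p (1 - p) univ
  simpa [productDistribution, compl_eq_univ_sdiff] using h.symm

lemma productDistribution_nonneg {p : ι → ℝ} (h0 : ∀ i, 0 ≤ p i) (h1 : ∀ i, p i ≤ 1)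
    (S : Finset ι) : 0 ≤ productDistribution p S :=
  mul_nonneg (prod_nonneg fun i _ ↦ h0 i) (prod_nonneg fun i _ ↦ sub_nonneg.2 (h1 i))

lemma productDistribution_inclusionProb_ne_zero (hμ : μ ∈ stdSimplex ℝ (Finset ι)) (hS : μ S ≠ 0) :
    productDistribution (inclusionProb μ) S ≠ 0 :=
  mul_ne_zero (prod_ne_zero_iff.2 fun _ hi ↦ inclusionProb_ne_zero hμ.1 hS hi)
    (prod_ne_zero_iff.2 fun _ hi ↦ one_sub_inclusionProb_ne_zero hμ hS (mem_compl.1 hi))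

lemma log_productDistribution {p : ι → ℝ} (h : productDistribution p S ≠ 0) :
    Real.log (productDistribution p S) =
      ∑ i ∈ S, Real.log (p i) + ∑ i ∈ Sᶜ, Real.log (1 - p i) := by
  obtain ⟨hp, hq⟩ := mul_ne_zero_iff.1 h
  rw [productDistribution, Real.log_mul hp hq, Real.log_prod (prod_ne_zero_iff.1 hp),
    Real.log_prod (prod_ne_zero_iff.1 hq)]

lemma sum_mul_log_productDistribution_inclusionProb (hμ : μ ∈ stdSimplex ℝ (Finset ι)) :
    ∑ S, μ S * Real.log (productDistribution (inclusionProb μ) S) =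
      -∑ i, Real.binEntropy (inclusionProb μ i) := by
  set p := inclusionProb μ with hp
  have hdual : ∑ S, μ S * ∑ i ∈ Sᶜ, Real.log (1 - p i) = ∑ i, (1 - p i) * Real.log (1 - p i) := by
    simp_rw [← sum_comp_compl fun S ↦ μ S * ∑ i ∈ Sᶜ, Real.log (1 - p i), compl_compl, hp,
      ← inclusionProb_dualDistribution hμ.2]
    exact sum_mul_sum_eq_sum_inclusionProb_mul (dualDistribution μ) _
  calc ∑ S, μ S * Real.log (productDistribution p S)
      = ∑ S, μ S * (∑ i ∈ S, Real.log (p i) + ∑ i ∈ Sᶜ, Real.log (1 - p i)) := by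
        refine sum_congr rfl fun S _ ↦ ?_
        rcases eq_or_ne (μ S) 0 with hS | hS
        · rw [hS, zero_mul, zero_mul]
        · rw [log_productDistribution (productDistribution_inclusionProb_ne_zero hμ hS)]
    _ = ∑ i, p i * Real.log (p i) + ∑ i, (1 - p i) * Real.log (1 - p i) := by
        simp_rw [mul_add, sum_add_distrib, hdual, sum_mul_sum_eq_sum_inclusionProb_mul, ← hp]
    _ = -∑ i, Real.binEntropy (p i) := by
        rw [← sum_add_distrib, ← sum_neg_distrib]
        refine sum_congr rfl fun i _ ↦ ?_
        simp only [Real.binEntropy, Real.log_inv]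
        ring

theorem shannonEntropy_le_sum_binEntropy_inclusionProb (hμ : μ ∈ stdSimplex ℝ (Finset ι)) :
    shannonEntropy μ ≤ ∑ i, Real.binEntropy (inclusionProb μ i) := by
  have h : shannonEntropy μ ≤ -∑ S, μ S * Real.log (productDistribution (inclusionProb μ) S) :=
    shannonEntropy_le_neg_sum_mul_log hμ.1
      (productDistribution_nonneg (inclusionProb_nonneg hμ.1) (inclusionProb_le_one hμ))
      (by rw [sum_productDistribution, hμ.2])
      fun S ↦ not_imp_not.1 (productDistribution_inclusionProb_ne_zero hμ)
  rwa [sum_mul_log_productDistribution_inclusionProb hμ, neg_neg] at h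

end InclusionProb

section FractionalLogConcavity

/-- The generating polynomial `g_μ` of a weight function on finite sets, encoded as a function on
`ι → ℝ`. -/
def generatingPoly (μ : Finset ι → ℝ) (x : ι → ℝ) : ℝ := ∑ S, μ S * ∏ i ∈ S, x i

/-- `α`-fractional log-concavity of the generating polynomial of `μ`: the function
`x ↦ log g_μ(x^α)` is concave on the positive orthant. -/
def IsFractionallyLogConcave (α : ℝ) (μ : Finset ι → ℝ) : Prop :=
  ConcaveOn ℝ {x : ι → ℝ | ∀ i, 0 < x i} fun x ↦ Real.log (generatingPoly μ fun i ↦ x i ^ α)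

lemma log_add_sum_log_le_log_generatingPoly (hμ : ∀ S, 0 ≤ μ S) (hS : μ S ≠ 0) {x : ι → ℝ}
    (hx : ∀ i, 0 < x i) :
    Real.log (μ S) + ∑ i ∈ S, Real.log (x i) ≤ Real.log (generatingPoly μ x) := by
  have hprod (T : Finset ι) : 0 < ∏ i ∈ T, x i := prod_pos fun i _ ↦ hx i
  rw [← Real.log_prod fun i _ ↦ (hx i).ne', ← Real.log_mul hS (hprod S).ne']
  exact Real.log_le_log (mul_pos ((hμ S).lt_of_ne' hS) (hprod S))
    (single_le_sum (f := fun T ↦ μ T * ∏ i ∈ T, x i)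
      (fun T _ ↦ mul_nonneg (hμ T) (hprod T).le) (mem_univ S))

namespace IsFractionallyLogConcave

variable {α : ℝ}

lemma sum_mul_log_generatingPoly_nonpos (h : IsFractionallyLogConcave α μ)
    (hμ : μ ∈ stdSimplex ℝ (Finset ι)) {z : Finset ι → ι → ℝ} (hz : ∀ S i, 0 < z S i)
    (hmean : ∀ i, ∑ S, μ S * z S i = 1) :
    ∑ S, μ S * Real.log (generatingPoly μ fun i ↦ z S i ^ α) ≤ 0 := by
  have hmean' : ∑ S, μ S • z S = 1 := by
    ext i
    simpa using hmean i
  have jensen := h.le_map_sum (t := univ) (fun S _ ↦ hμ.1 S) hμ.2 (fun S _ ↦ hz S)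
  rw [hmean'] at jensen
  simpa [generatingPoly, hμ.2] using jensen

lemma mul_sum_mul_sum_log_le_shannonEntropy (h : IsFractionallyLogConcave α μ)
    (hμ : μ ∈ stdSimplex ℝ (Finset ι)) {z : Finset ι → ι → ℝ} (hz : ∀ S i, 0 < z S i)
    (hmean : ∀ i, ∑ S, μ S * z S i = 1) :
    α * ∑ S, μ S * ∑ i ∈ S, Real.log (z S i) ≤ shannonEntropy μ := by
  have hterm (S : Finset ι) : α * (μ S * ∑ i ∈ S, Real.log (z S i)) - Real.negMulLog (μ S) ≤
      μ S * Real.log (generatingPoly μ fun i ↦ z S i ^ α) := by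
    rcases eq_or_ne (μ S) 0 with hS | hS
    · simp [hS]
    · calc α * (μ S * ∑ i ∈ S, Real.log (z S i)) - Real.negMulLog (μ S)
          = μ S * (Real.log (μ S) + ∑ i ∈ S, Real.log (z S i ^ α)) := by
            simp_rw [Real.log_rpow (hz S _), ← mul_sum, Real.negMulLog]
            ring
        _ ≤ μ S * Real.log (generatingPoly μ fun i ↦ z S i ^ α) :=
            mul_le_mul_of_nonneg_left (log_add_sum_log_le_log_generatingPoly hμ.1 hS
              fun i ↦ Real.rpow_pos_of_pos (hz S i) α) (hμ.1 S)
  have hsum := (sum_le_sum fun S (_ : S ∈ univ) ↦ hterm S).trans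
    (h.sum_mul_log_generatingPoly_nonpos hμ hz hmean)
  rwa [sum_sub_distrib, ← mul_sum, sub_nonpos] at hsum

variable [DecidableEq ι]

lemma mul_sum_inclusionProb_mul_log_le_shannonEntropy (h : IsFractionallyLogConcave α μ)
    (hμ : μ ∈ stdSimplex ℝ (Finset ι)) {ε : ℝ} (hε : 0 < ε) :
    α * ∑ i, inclusionProb μ i * Real.log ((1 + ε) / (inclusionProb μ i + ε)) ≤
      shannonEntropy μ := by
  set p := inclusionProb μ with hp
  have hpε (i : ι) : 0 < p i + ε := add_pos_of_nonneg_of_pos (inclusionProb_nonneg hμ.1 i) hε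
  let z (S : Finset ι) (i : ι) : ℝ := ((if i ∈ S then 1 else 0) + ε) / (p i + ε)
  have hz (S : Finset ι) (i : ι) : 0 < z S i := div_pos (by positivity) (hpε i)
  have hmean (i : ι) : ∑ S, μ S * z S i = 1 := by
    simp_rw [z, mul_div_assoc', ← sum_div, mul_add, sum_add_distrib, ← sum_mul, hμ.2, mul_ite,
      mul_one, mul_zero, ← sum_filter, one_mul]
    exact div_self (hpε i).ne'
  have hlog : ∑ S, μ S * ∑ i ∈ S, Real.log (z S i) =
      ∑ i, p i * Real.log ((1 + ε) / (p i + ε)) := by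
    rw [hp, ← sum_mul_sum_eq_sum_inclusionProb_mul]
    refine sum_congr rfl fun S _ ↦ congrArg (μ S * ·) (sum_congr rfl fun i hi ↦ ?_)
    simp only [z, hi, if_true, hp]
  rw [← hlog]
  exact h.mul_sum_mul_sum_log_le_shannonEntropy hμ hz hmean

theorem mul_sum_negMulLog_inclusionProb_le_shannonEntropy (h : IsFractionallyLogConcave α μ)
    (hμ : μ ∈ stdSimplex ℝ (Finset ι)) :
    α * ∑ i, Real.negMulLog (inclusionProb μ i) ≤ shannonEntropy μ := by
  have hlim (p : ℝ) : Filter.Tendsto (fun ε ↦ p * Real.log ((1 + ε) / (p + ε)))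
      (nhdsWithin 0 (Set.Ioi 0)) (nhds (Real.negMulLog p)) := by
    rcases eq_or_ne p 0 with rfl | hp
    · simp
    · have hcont : ContinuousAt (fun ε ↦ p * Real.log ((1 + ε) / (p + ε))) 0 := by
        fun_prop (disch := simpa using hp)
      simpa [Real.negMulLog] using hcont.tendsto.mono_left nhdsWithin_le_nhds
  refine le_of_tendsto ((tendsto_finsetSum univ fun i _ ↦ hlim (inclusionProb μ i)).const_mul α) ?_
  filter_upwards [self_mem_nhdsWithin] with ε hε
  exact h.mul_sum_inclusionProb_mul_log_le_shannonEntropy hμ hε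

theorem half_mul_sum_binEntropy_inclusionProb_le_shannonEntropy
    (h : IsFractionallyLogConcave α μ) (hdual : IsFractionallyLogConcave α (dualDistribution μ))
    (hμ : μ ∈ stdSimplex ℝ (Finset ι)) :
    α / 2 * ∑ i, Real.binEntropy (inclusionProb μ i) ≤ shannonEntropy μ := by
  have hle := h.mul_sum_negMulLog_inclusionProb_le_shannonEntropy hμ
  have hle_dual := hdual.mul_sum_negMulLog_inclusionProb_le_shannonEntropy
    (dualDistribution_mem_stdSimplex hμ)
  simp_rw [shannonEntropy_dualDistribution, inclusionProb_dualDistribution hμ.2] at hle_dual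
  simp_rw [Real.binEntropy_eq_negMulLog_add_negMulLog_one_sub, sum_add_distrib]
  linarith

end IsFractionallyLogConcave

end FractionalLogConcavity

theorem entropy_two_sided_bound_of_fractionally_log_concave_general [DecidableEq ι] {α : ℝ}
    (hμ : μ ∈ stdSimplex ℝ (Finset ι)) (h : IsFractionallyLogConcave α μ)
    (hdual : IsFractionallyLogConcave α (dualDistribution μ)) :
    α / 2 * ∑ i, Real.binEntropy (inclusionProb μ i) ≤ shannonEntropy μ ∧
      shannonEntropy μ ≤ ∑ i, Real.binEntropy (inclusionProb μ i) :=
  ⟨h.half_mul_sum_binEntropy_inclusionProb_le_shannonEntropy hdual hμ,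
    shannonEntropy_le_sum_binEntropy_inclusionProb hμ⟩

end SubsetDistribution

/-- If both the generating polynomial of `μ` and that of its dual `μ*(S) = μ([n]∖S)`
are `α`-fractionally log-concave, then the sum of the binary entropies of the marginals
approximates the entropy of `μ` within a factor `α/2`. -/
theorem entropy_two_sided_bound_of_fractionally_log_concave (n : ℕ) (α : ℝ)
    (hα0 : 0 < α) (hα1 : α ≤ 1)
    (μ : Finset (Fin n) → ℝ) (hμ0 : ∀ S, 0 ≤ μ S)
    (hμ1 : ∑ S : Finset (Fin n), μ S = 1)
    (hflc : ConcaveOn ℝ {x : Fin n → ℝ | ∀ i, 0 < x i}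
      (fun x => Real.log (∑ S : Finset (Fin n), μ S * ∏ i ∈ S, x i ^ α)))
    (hflcDual : ConcaveOn ℝ {x : Fin n → ℝ | ∀ i, 0 < x i}
      (fun x => Real.log (∑ S : Finset (Fin n), μ Sᶜ * ∏ i ∈ S, x i ^ α))) :
    (α / 2) * (∑ i : Fin n,
        ((∑ S ∈ univ.filter (fun S : Finset (Fin n) => i ∈ S), μ S) *
            Real.log (1 / ∑ S ∈ univ.filter (fun S : Finset (Fin n) => i ∈ S), μ S) +
          (1 - ∑ S ∈ univ.filter (fun S : Finset (Fin n) => i ∈ S), μ S) *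
            Real.log (1 / (1 - ∑ S ∈ univ.filter (fun S : Finset (Fin n) => i ∈ S), μ S))))
      ≤ ∑ S : Finset (Fin n), μ S * Real.log (1 / μ S) ∧
    (∑ S : Finset (Fin n), μ S * Real.log (1 / μ S)) ≤
      ∑ i : Fin n,
        ((∑ S ∈ univ.filter (fun S : Finset (Fin n) => i ∈ S), μ S) *
            Real.log (1 / ∑ S ∈ univ.filter (fun S : Finset (Fin n) => i ∈ S), μ S) +
          (1 - ∑ S ∈ univ.filter (fun S : Finset (Fin n) => i ∈ S), μ S) *
            Real.log (1 / (1 - ∑ S ∈ univ.filter (fun S : Finset (Fin n) => i ∈ S), μ S))) := by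
  simpa only [Real.binEntropy, shannonEntropy, inclusionProb, Real.negMulLog, one_div,
    Real.log_inv, mul_neg, neg_mul] using
    entropy_two_sided_bound_of_fractionally_log_concave_general ⟨hμ0, hμ1⟩ hflc hflcDual
end

section
/- Let k ≥ 1 be an integer, let α, β ∈ ℤ_{≥0}^n with α ≠ β, and let a, b > 0 be positive reals. If the binomial g(z₁,…,zₙ) = a·z^α + b·z^β (where z^α = Π_i z_i^{α_i}) is Γ_{1/k}-stable, then Σ_{i=1}^{n} |α_i − β_i| ≤ 2k. Consequently, the edges of the Newton polytope of a Γ_{1/k}-stable distribution have ℓ₁-length at most 2k. -/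
open Finset

/-!
On the torus the binomial vanishes exactly when `∏ i, z i ^ (α i - β i) = -b / a`. Let
`S = ∑ i, |α i - β i|` and let `ζ` be the principal `S`-th root of `-b / a`, so that
`|arg ζ| = |arg (-b / a)| / S`. Taking `z i` to be `ζ`, `ζ⁻¹` or `1` according to the sign of
`α i - β i` turns the product into `ζ ^ S = -b / a`. Stability therefore forces `ζ` out of the
sector. For positive `a`, `b` the argument of `-b / a` is `π`.
-/

theorem prod_zpow_sign_zpow {ι M : Type*} [DivisionCommMonoid M] (s : Finset ι) (ζ : M)
    (d : ι → ℤ) :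
    ∏ i ∈ s, (ζ ^ (d i).sign) ^ d i = ζ ^ ∑ i ∈ s, (d i).natAbs := by
  simp_rw [← zpow_mul, Int.sign_mul_self_eq_natAbs, zpow_natCast]
  exact prod_pow_eq_pow_sum s _ ζ

theorem arg_cpow_ofReal {z : ℂ} {r : ℝ} (h : r * z.arg ∈ Set.Ioc (-Real.pi) Real.pi) :
    (z ^ (r : ℂ)).arg = r * z.arg := by
  rcases eq_or_ne z 0 with rfl | hz
  · rcases eq_or_ne r 0 with rfl | hr
    · simp
    · simp [hr]
  · have him : (Complex.log z * r).im = r * z.arg := by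
      rw [Complex.im_mul_ofReal, Complex.log_im, mul_comm]
    rw [Complex.cpow_def_of_ne_zero hz, Complex.arg_exp, him, toIocMod_eq_self]
    rwa [neg_add_eq_sub, two_mul, add_sub_cancel_right]

theorem arg_cpow_natCast_inv (z : ℂ) {n : ℕ} (hn : n ≠ 0) :
    (z ^ (n⁻¹ : ℂ)).arg = z.arg / n := by
  have hn₁ : (1 : ℝ) ≤ n := by exact_mod_cast Nat.one_le_iff_ne_zero.mpr hn
  have hmem : (n : ℝ)⁻¹ * z.arg ∈ Set.Ioc (-Real.pi) Real.pi := by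
    rw [inv_mul_eq_div, Set.mem_Ioc, lt_div_iff₀ (by positivity), div_le_iff₀ (by positivity)]
    constructor <;> nlinarith [z.neg_pi_lt_arg, z.arg_le_pi, Real.pi_pos]
  simpa [inv_mul_eq_div] using arg_cpow_ofReal hmem

theorem arg_neg_ofReal_div_ofReal {a b : ℝ} (h : 0 < b / a) : (-b / a : ℂ).arg = Real.pi := by
  rw [neg_div, ← Complex.ofReal_div, ← Complex.ofReal_neg]
  exact Complex.arg_ofReal_of_neg (neg_lt_zero.mpr h)

theorem inSector.inv {θ : ℝ} {z : ℂ} (hz : inSector θ z) : inSector θ z⁻¹ :=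
  ⟨inv_ne_zero hz.1, by rw [Complex.abs_arg_inv]; exact hz.2⟩

theorem inSector.zpow_sign {θ : ℝ} {z : ℂ} (hz : inSector θ z) (m : ℤ) :
    inSector θ (z ^ m.sign) := by
  rcases Int.sign_trichotomy m with h | h | h <;> rw [h]
  · rwa [zpow_one]
  · exact ⟨by simp, by simpa using (abs_nonneg _).trans_lt hz.2⟩
  · rw [zpow_neg_one]
    exact hz.inv

theorem exists_inSector_pow_eq {θ : ℝ} {c : ℂ} (hc : c ≠ 0) {n : ℕ}
    (h : |c.arg| < θ * Real.pi / 2 * n) :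
    ∃ ζ, inSector θ ζ ∧ ζ ^ n = c := by
  have hn : n ≠ 0 := by
    rintro rfl
    exact (abs_nonneg c.arg).not_gt (by simpa using h)
  have hroot : (c ^ (n⁻¹ : ℂ)) ^ n = c := Complex.cpow_nat_inv_pow c hn
  refine ⟨c ^ (n⁻¹ : ℂ), ⟨fun h0 => hc ?_, ?_⟩, hroot⟩
  · rw [← hroot, h0, zero_pow hn]
  · rwa [arg_cpow_natCast_inv c hn, abs_div, Nat.abs_cast, div_lt_iff₀ (by positivity)]

theorem exists_inSector_prod_zpow_eq {ι : Type*} [Fintype ι] {θ : ℝ} {c : ℂ} (hc : c ≠ 0)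
    {d : ι → ℤ} (h : |c.arg| < θ * Real.pi / 2 * (∑ i, (d i).natAbs : ℕ)) :
    ∃ z : ι → ℂ, (∀ i, inSector θ (z i)) ∧ ∏ i, z i ^ d i = c := by
  obtain ⟨ζ, hζ, hpow⟩ := exists_inSector_pow_eq hc h
  exact ⟨fun i => ζ ^ (d i).sign, fun i => hζ.zpow_sign (d i),
    (prod_zpow_sign_zpow univ ζ d).trans hpow⟩

theorem binomial_sector_stable_exponent_bound_general {ι : Type*} [Fintype ι] {θ : ℝ} {a b : ℂ}
    (ha : a ≠ 0) (hb : b ≠ 0) {α β : ι → ℤ}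
    (hstable : ∀ z : ι → ℂ, (∀ i, inSector θ (z i)) →
      a * ∏ i, z i ^ α i + b * ∏ i, z i ^ β i ≠ 0) :
    θ * Real.pi / 2 * (∑ i, (α i - β i).natAbs : ℕ) ≤ |(-b / a).arg| := by
  by_contra! hlt
  obtain ⟨z, hz, hprod⟩ :=
    exists_inSector_prod_zpow_eq (div_ne_zero (neg_ne_zero.mpr hb) ha) hlt
  have hfactor : ∏ i, z i ^ α i = -b / a * ∏ i, z i ^ β i := by
    rw [← hprod, ← prod_mul_distrib]
    exact prod_congr rfl fun i _ => by rw [← zpow_add₀ (hz i).1, sub_add_cancel]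
  refine hstable z hz ?_
  rw [hfactor]
  field_simp
  ring

/-- If the binomial `g(z) = a z^α + b z^β` (with `a, b > 0`, `α ≠ β`) is
`Γ_{1/k}`-stable, then `Σ_i |α_i − β_i| ≤ 2k`.  (Consequently, the edges of the Newton
polytope of a `Γ_{1/k}`-stable distribution have `ℓ₁`-length at most `2k`.) -/
theorem binomial_sector_stable_exponent_bound (n k : ℕ) (hk : 1 ≤ k)
    (a b : ℝ) (ha : 0 < a) (hb : 0 < b)
    (α β : Fin n → ℕ) (hne : α ≠ β)
    (hstable : ∀ z : Fin n → ℂ, (∀ i, inSector (1 / (k : ℝ)) (z i)) →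
      (a : ℂ) * (∏ i, z i ^ α i) + (b : ℂ) * (∏ i, z i ^ β i) ≠ 0) :
    (∑ i, ((α i : ℤ) - (β i : ℤ)).natAbs) ≤ 2 * k := by
  have hbound := binomial_sector_stable_exponent_bound_general (α := fun i => (α i : ℤ))
    (β := fun i => (β i : ℤ)) (Complex.ofReal_ne_zero.mpr ha.ne')
    (Complex.ofReal_ne_zero.mpr hb.ne') (by simpa only [zpow_natCast] using hstable)
  rw [arg_neg_ofReal_div_ofReal (div_pos hb ha), abs_of_pos Real.pi_pos] at hbound
  have hk₀ : (0 : ℝ) < k := by exact_mod_cast hk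
  field_simp at hbound
  rw [mul_comm]
  exact_mod_cast hbound
end
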